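/- Let r ≥ 1 be an integer and let n be an integer with n ≥ 10r if r is odd and n ≥ 7r if r is even. Then ex(n, θ_{r+1}) = ⌊n²/4⌋. -/

import Mathlib

open SimpleGraph Finset

attribute [local instance] Classical.propDecidable

/-- The spectral radius (largest adjacency eigenvalue) of a graph on `Fin n`. -/
noncomputable def adjSpectralRadius {n : ℕ} (G : SimpleGraph (Fin n)) : ℝ :=
  sSup (spectrum ℝ (G.adjMatrix ℝ))

/-- `G` contains a copy of `H` (a subgraph isomorphic to `H`). -/
def Contains {α β : Type*} (G : SimpleGraph α) (H : SimpleGraph β) : Prop :=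
  ∃ f : β ↪ α, ∀ a b, H.Adj a b → G.Adj (f a) (f b)

/-- The book `B_s`: `s` triangles sharing a common edge, i.e. `K_{2,s}` plus the
edge inside the part of size two. -/
def book (s : ℕ) : SimpleGraph (Fin 2 ⊕ Fin s) :=
  SimpleGraph.fromRel (fun x _ => x.isLeft = true)

/-- The theta graph `θ_{r+1} = θ(1,2,r+1)`: vertices `0,…,r+1` form a path of length
`r+1`, the edge `0 ~ (r+1)`, and vertex `r+2` is adjacent to `0` and `r+1`. -/
def theta (r : ℕ) : SimpleGraph (Fin (r + 3)) :=
  SimpleGraph.fromRel (fun x y =>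
    (x.val + 1 = y.val ∧ y.val ≤ r + 1) ∨
    (x.val = 0 ∧ y.val = r + 1) ∨
    (x.val = r + 2 ∧ (y.val = 0 ∨ y.val = r + 1)))

/-- The number of edges of a graph. -/
noncomputable def edgeCount {V : Type*} (G : SimpleGraph V) : ℕ := G.edgeSet.ncard

/-- The number of ordered pairs `(a,b) ∈ s × t` with `a ~ b`.  For disjoint `s` and `t`
this is the number `e(s,t)` of edges between `s` and `t`; for `s = t` it is `2·e(s)`. -/
noncomputable def ordPairs {V : Type*} (G : SimpleGraph V) (s t : Finset V) : ℕ :=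
  ((s ×ˢ t).filter fun p => G.Adj p.1 p.2).card

/-- The number of edges inside a vertex subset `s`. -/
noncomputable def edgesIn {V : Type*} (G : SimpleGraph V) (s : Finset V) : ℕ :=
  (G.induce (s : Set V)).edgeSet.ncard

/-!
By Cauchy–Schwarz, `G` has at most `n² / 4` edges as soon as `4 ∑_{v ∈ N(u)} d(v) ≤ n²` for every
vertex `u`. Put `A = N(u)`, `B = V \ A`, `k = ⌈r / 2⌉`; then `∑_{v ∈ A} d(v) = 2 e(A) + e(A, B)`,
while `n² = (#A + #B)²` exceeds `4 #A #B` by `(#A - #B)²`.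

A `θ_{r+1}`-free graph has no path with `r + 1` edges inside `A`, since `u` would close it up, so
`2 e(A) ≤ r #A` by Erdős–Gallai. Let `M` be the set of vertices of `A` that miss fewer than about
`(#B - k) / 2` vertices of `B`; any two of them have more than `k` common neighbours in `B`.
If `M` has at most `k + 1` elements, then `e(A, B)` falls short of `#A #B` by enough. Otherwise
paths that alternate between `M` and `B` have any prescribed even length up to `2 k`; an edge from
`M` into `A` then yields a `θ_{r+1}` when `r` is even, and when `r` is odd it leads to a vertex
outside `M` with no other neighbour in `A`. So almost all edges of `A` avoid `M`, which improves the
bound on `2 e(A)` from `r #A` to `max 2 r #(A \ M)`, and each vertex of `A \ M` loses about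
`(#B - k) / 2` in `e(A, B)`.
-/

section LongestPath

variable {V : Type*} {G : SimpleGraph V} {S : Finset V} {r : ℕ} {x y : V} {p : G.Walk x y}

/-- Every path of `G` all of whose vertices lie in `S` has at most `r` edges. -/
def PathLengthLE (G : SimpleGraph V) (S : Finset V) (r : ℕ) : Prop :=
  ∀ ⦃x y : V⦄ (p : G.Walk x y), p.IsPath → (∀ z ∈ p.support, z ∈ S) → p.length ≤ r

/-- `p` is a path inside `S`, and no path inside `S` is longer. -/
structure IsLongestPathIn (S : Finset V) (p : G.Walk x y) : Prop where
  isPath : p.IsPath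
  mem : ∀ z ∈ p.support, z ∈ S
  pathLengthLE : PathLengthLE G S p.length

theorem PathLengthLE.mono {T : Finset V} (hS : PathLengthLE G S r) (hTS : T ⊆ S) :
    PathLengthLE G T r :=
  fun _ _ p hp hpT => hS p hp fun z hz => hTS (hpT z hz)

theorem PathLengthLE.exists_isLongestPathIn (hr : PathLengthLE G S r) (hS : S.Nonempty) :
    ∃ (x y : V) (p : G.Walk x y), IsLongestPathIn S p := by
  have hex : ∃ m, PathLengthLE G S m := ⟨r, hr⟩
  obtain ⟨x, y, p, hp, hpS, hlen⟩ : ∃ (x y : V) (p : G.Walk x y), p.IsPath ∧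
      (∀ z ∈ p.support, z ∈ S) ∧ Nat.find hex ≤ p.length := by
    rcases Nat.eq_zero_or_pos (Nat.find hex) with h0 | hpos
    · obtain ⟨x, hx⟩ := hS
      exact ⟨x, x, .nil, .nil, by simpa using hx, by simp [h0]⟩
    · have hmin := Nat.find_min hex (Nat.sub_one_lt_of_lt hpos)
      simp only [PathLengthLE, not_forall, not_le] at hmin
      obtain ⟨x, y, p, hp, hpS, hlen⟩ := hmin
      exact ⟨x, y, p, hp, hpS, by omega⟩
  exact ⟨x, y, p, hp, hpS, fun _ _ q hq hqS => (Nat.find_spec hex q hq hqS).trans hlen⟩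

/-- Pósa rotation: reroute `p` from its last vertex to the initial segment `p.take i`, traversed in
any way `t`, and so make `p.getVert (i + 1)` the first vertex. -/
theorem exists_walk_support_perm_of_adj {a b : V} {i : ℕ} (hi : i < p.length) (t : G.Walk a b)
    (ht : t.support.Perm (p.take i).support) (hya : G.Adj y a) :
    ∃ q : G.Walk (p.getVert (i + 1)) b, q.support.Perm p.support := by
  refine ⟨(p.drop (i + 1)).append (.cons hya t), ?_⟩
  rw [Walk.support_append, Walk.support_cons, List.tail_cons,
    Walk.drop_support_eq_support_drop_min, min_eq_left hi]
  rw [Walk.support_take] at ht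
  calc p.support.drop (i + 1) ++ t.support
      |>.Perm (p.support.drop (i + 1) ++ p.support.take (i + 1)) := ht.append_left _
    _ |>.Perm (p.support.take (i + 1) ++ p.support.drop (i + 1)) := List.perm_append_comm
    _ = p.support := List.take_append_drop _ _

namespace IsLongestPathIn

theorem of_support_perm {a b : V} {q : G.Walk a b} (hp : IsLongestPathIn S p)
    (hqp : q.support.Perm p.support) : IsLongestPathIn S q where
  isPath := .mk' (hqp.nodup_iff.2 hp.isPath.support_nodup)
  mem z hz := hp.mem z (hqp.mem_iff.1 hz)
  pathLengthLE := by
    have hlen := hqp.length_eq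
    rw [Walk.length_support, Walk.length_support, Nat.add_right_cancel_iff] at hlen
    exact hlen ▸ hp.pathLengthLE

theorem reverse (hp : IsLongestPathIn S p) : IsLongestPathIn S p.reverse :=
  hp.of_support_perm (by rw [Walk.support_reverse]; exact List.reverse_perm _)

theorem mem_support_of_adj_start (hp : IsLongestPathIn S p) {w : V} (hw : w ∈ S)
    (hxw : G.Adj x w) : w ∈ p.support := by
  by_contra hwp
  have hlonger := hp.pathLengthLE (.cons hxw.symm p) (hp.isPath.cons hwp) (by
    simpa only [Walk.support_cons, List.forall_mem_cons] using ⟨hw, hp.mem⟩)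
  simp at hlonger

theorem mem_support_of_adj_end (hp : IsLongestPathIn S p) {w : V} (hw : w ∈ S)
    (hyw : G.Adj y w) : w ∈ p.support := by
  simpa using hp.reverse.mem_support_of_adj_start hw hyw

/-- Once the ends of a longest path are adjacent, the resulting cycle can be cut open at any of its
vertices. -/
theorem mem_support_of_adj_of_adj_ends (hp : IsLongestPathIn S p) (hyx : G.Adj y x) {z w : V}
    (hz : z ∈ p.support) (hw : w ∈ S) (hzw : G.Adj z w) : w ∈ p.support := by
  obtain ⟨i, rfl, hi⟩ := Walk.mem_support_iff_exists_getVert.1 hz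
  rcases i with _ | i
  · exact hp.mem_support_of_adj_start hw (by simpa using hzw)
  · obtain ⟨q, hq⟩ := exists_walk_support_perm_of_adj hi (p.take i) (.refl _) hyx
    exact hq.mem_iff.1 ((hp.of_support_perm hq).mem_support_of_adj_start hw hzw)

theorem mem_support_of_adj_of_crossing (hp : IsLongestPathIn S p) {i : ℕ} (hi : i < p.length)
    (hx : G.Adj x (p.getVert (i + 1))) (hy : G.Adj y (p.getVert i)) {z w : V}
    (hz : z ∈ p.support) (hw : w ∈ S) (hzw : G.Adj z w) : w ∈ p.support := by
  obtain ⟨q, hq⟩ := exists_walk_support_perm_of_adj hi (p.take i).reverse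
    (by rw [Walk.support_reverse]; exact List.reverse_perm _) hy
  exact hq.mem_iff.1 <|
    (hp.of_support_perm hq).mem_support_of_adj_of_adj_ends hx (hq.mem_iff.2 hz) hw hzw

theorem card_filter_adj_le_length (hp : IsLongestPathIn S p) {z : V}
    (hz : ∀ w ∈ S, G.Adj z w → w ∈ p.support) (hzp : z ∈ p.support) :
    #{w ∈ S | G.Adj z w} ≤ p.length := by
  have hsub : {w ∈ S | G.Adj z w} ⊆ p.support.toFinset.erase z := fun w hw => by
    rw [mem_filter] at hw
    exact mem_erase.2 ⟨hw.2.ne', List.mem_toFinset.2 (hz w hw.1 hw.2)⟩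
  calc #{w ∈ S | G.Adj z w} ≤ #(p.support.toFinset.erase z) := card_le_card hsub
    _ = p.length := by
      rw [card_erase_of_mem (List.mem_toFinset.2 hzp),
        List.toFinset_card_of_nodup hp.isPath.support_nodup, Walk.length_support,
        Nat.add_sub_cancel]

theorem card_filter_adj_start_le (hp : IsLongestPathIn S p) :
    #{w ∈ S | G.Adj x w} ≤ #{i ∈ range p.length | G.Adj x (p.getVert (i + 1))} := by
  refine card_le_card_of_surjOn (fun i => p.getVert (i + 1)) fun w hw => ?_
  simp only [coe_filter, Set.mem_ofPred_eq] at hw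
  obtain ⟨i, rfl, hi⟩ :=
    Walk.mem_support_iff_exists_getVert.1 (hp.mem_support_of_adj_start hw.1 hw.2)
  rcases i with _ | i
  · simp at hw
  · exact ⟨i, by simpa using ⟨hi, hw.2⟩, rfl⟩

theorem card_filter_adj_end_le (hp : IsLongestPathIn S p) :
    #{w ∈ S | G.Adj y w} ≤ #{i ∈ range p.length | G.Adj y (p.getVert i)} := by
  refine card_le_card_of_surjOn p.getVert fun w hw => ?_
  simp only [coe_filter, Set.mem_ofPred_eq] at hw
  obtain ⟨i, rfl, hi⟩ :=
    Walk.mem_support_iff_exists_getVert.1 (hp.mem_support_of_adj_end hw.1 hw.2)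
  have hne : i ≠ p.length := by
    rintro rfl
    simp at hw
  exact ⟨i, by simpa using ⟨lt_of_le_of_ne hi hne, hw.2⟩, rfl⟩

theorem card_filter_adj_ends_le (hp : IsLongestPathIn S p)
    (hcross : ∀ i < p.length, G.Adj x (p.getVert (i + 1)) → ¬ G.Adj y (p.getVert i)) :
    #{w ∈ S | G.Adj x w} + #{w ∈ S | G.Adj y w} ≤ p.length := by
  have hdisj : Disjoint {i ∈ range p.length | G.Adj x (p.getVert (i + 1))}
      {i ∈ range p.length | G.Adj y (p.getVert i)} :=
    disjoint_filter.2 fun i hi => hcross i (mem_range.1 hi)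
  calc _ ≤ #{i ∈ range p.length | G.Adj x (p.getVert (i + 1))} +
        #{i ∈ range p.length | G.Adj y (p.getVert i)} :=
        Nat.add_le_add hp.card_filter_adj_start_le hp.card_filter_adj_end_le
    _ ≤ #(range p.length) := by
        rw [← card_union_of_disjoint hdisj]
        exact card_le_card (union_subset (filter_subset _ _) (filter_subset _ _))
    _ = p.length := card_range _

end IsLongestPathIn

end LongestPath

section Interedges

variable {V : Type*} {G : SimpleGraph V} {A B C M S : Finset V} {r t : ℕ}

theorem card_interedges_eq_sum (G : SimpleGraph V) (S T : Finset V) :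
    #(G.interedges S T) = ∑ v ∈ S, #{w ∈ T | G.Adj v w} := by
  simp only [interedges_def, card_filter, sum_product]

theorem card_interedges_comm (G : SimpleGraph V) (S T : Finset V) :
    #(G.interedges S T) = #(G.interedges T S) :=
  have := G.symm
  Rel.card_interedges_comm S T

theorem card_interedges_add_sdiff_left (G : SimpleGraph V) (hCS : C ⊆ S) (T : Finset V) :
    #(G.interedges C T) + #(G.interedges (S \ C) T) = #(G.interedges S T) := by
  simp only [card_interedges_eq_sum]
  rw [add_comm, sum_sdiff hCS]

theorem card_interedges_add_sdiff_right (G : SimpleGraph V) (hCS : C ⊆ S) (T : Finset V) :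
    #(G.interedges T C) + #(G.interedges T (S \ C)) = #(G.interedges T S) := by
  simp only [card_interedges_comm G T, card_interedges_add_sdiff_left G hCS]

theorem card_interedges_le_mul_of_forall_le (h : ∀ v ∈ S, #{w ∈ B | G.Adj v w} ≤ t) :
    #(G.interedges S B) ≤ t * #S := by
  rw [card_interedges_eq_sum, mul_comm]
  exact sum_le_card_nsmul S _ t h

theorem card_interedges_add_mul_card_sdiff_le (hMA : M ⊆ A)
    (h : ∀ v ∈ A \ M, #{w ∈ B | G.Adj v w} + t ≤ #B) :
    #(G.interedges A B) + t * #(A \ M) ≤ #A * #B := by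
  have hsdiff : #(G.interedges (A \ M) B) + t * #(A \ M) ≤ #(A \ M) * #B := by
    rw [card_interedges_eq_sum, mul_comm t, ← smul_eq_mul #(A \ M) t, ← sum_const,
      ← sum_add_distrib]
    exact sum_le_card_nsmul _ _ _ h
  calc #(G.interedges A B) + t * #(A \ M)
      = #(G.interedges M B) + (#(G.interedges (A \ M) B) + t * #(A \ M)) := by
        rw [← card_interedges_add_sdiff_left G hMA, add_assoc]
    _ ≤ #M * #B + #(A \ M) * #B := Nat.add_le_add (card_interedges_le_mul G M B) hsdiff
    _ = #A * #B := by rw [← add_mul, add_comm #M, card_sdiff_add_card_eq_card hMA]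

theorem IsLongestPathIn.exists_card_interedges_add_le {x y : V} {p : G.Walk x y}
    (hp : IsLongestPathIn S p) : ∃ C ⊆ S, C.Nonempty ∧
      #(G.interedges C S) + #(G.interedges (S \ C) C) ≤ p.length * #C := by
  by_cases hcross : ∃ i < p.length, G.Adj x (p.getVert (i + 1)) ∧ G.Adj y (p.getVert i)
  · obtain ⟨i, hi, hxi, hyi⟩ := hcross
    have hclosed {z w : V} (hz : z ∈ p.support) : w ∈ S → G.Adj z w → w ∈ p.support :=
      hp.mem_support_of_adj_of_crossing hi hxi hyi hz
    have hempty : G.interedges (S \ p.support.toFinset) p.support.toFinset = ∅ := by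
      refine eq_empty_of_forall_notMem fun ⟨w, z⟩ h => ?_
      rw [mem_interedges_iff, mem_sdiff, List.mem_toFinset, List.mem_toFinset] at h
      exact h.1.2 (hclosed h.2.1 h.1.1 h.2.2.symm)
    refine ⟨p.support.toFinset, fun z hz => hp.mem z (List.mem_toFinset.1 hz),
      ⟨x, List.mem_toFinset.2 p.start_mem_support⟩, ?_⟩
    rw [hempty, card_empty, add_zero]
    exact card_interedges_le_mul_of_forall_le fun z hz =>
      have hz := List.mem_toFinset.1 hz
      hp.card_filter_adj_le_length (fun w hw => hclosed hz hw) hz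
  · have hdeg := hp.card_filter_adj_ends_le fun i hi hxi hyi => hcross ⟨i, hi, hxi, hyi⟩
    obtain ⟨c, hcS, hc⟩ : ∃ c ∈ S, 2 * #{w ∈ S | G.Adj c w} ≤ p.length := by
      rcases le_total #{w ∈ S | G.Adj x w} #{w ∈ S | G.Adj y w} with h | h
      · exact ⟨x, hp.mem x p.start_mem_support, by omega⟩
      · exact ⟨y, hp.mem y p.end_mem_support, by omega⟩
    refine ⟨{c}, singleton_subset_iff.2 hcS, singleton_nonempty c, ?_⟩
    have hback : #(G.interedges (S \ {c}) {c}) ≤ #(G.interedges {c} S) := by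
      rw [card_interedges_comm]
      exact card_le_card (interedges_mono G Subset.rfl sdiff_subset)
    have hforth : #(G.interedges {c} S) = #{w ∈ S | G.Adj c w} := by
      rw [card_interedges_eq_sum, sum_singleton]
    rw [card_singleton]
    omega

/-- The Erdős–Gallai theorem on paths; `#(G.interedges S S)` is twice the number of edges inside
`S`. -/
theorem PathLengthLE.card_interedges_le (hr : PathLengthLE G S r) :
    #(G.interedges S S) ≤ r * #S := by
  induction S using Finset.strongInduction with
  | H S ih =>
    rcases S.eq_empty_or_nonempty with rfl | hS
    · simp
    obtain ⟨x, y, p, hp⟩ := hr.exists_isLongestPathIn hS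
    obtain ⟨C, hCS, hC, hCle⟩ := hp.exists_card_interedges_add_le
    have hpr : p.length * #C ≤ r * #C := Nat.mul_le_mul_right _ (hr p hp.isPath hp.mem)
    have hrest : #(G.interedges (S \ C) (S \ C)) ≤ r * #(S \ C) :=
      ih _ (sdiff_ssubset hCS hC) (hr.mono sdiff_subset)
    have hcard : r * #S = r * #C + r * #(S \ C) := by
      rw [← mul_add, add_comm #C, card_sdiff_add_card_eq_card hCS]
    rw [← card_interedges_add_sdiff_left G hCS, ← card_interedges_add_sdiff_right G hCS (S \ C)]
    omega

end Interedges

section Theta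

variable {V : Type*} {G : SimpleGraph V} {A B M N : Finset V} {k r : ℕ} {u v w x y : V}

theorem contains_theta_of_isPath {p : G.Walk x y} (hp : p.IsPath) (hlen : p.length = r + 1)
    (hxy : G.Adj x y) (hw : w ∉ p.support) (hwx : G.Adj w x) (hwy : G.Adj w y) :
    Contains G (theta r) := by
  let f (i : Fin (r + 3)) : V := if i.val ≤ r + 1 then p.getVert i else w
  have hx : p.getVert 0 = x := p.getVert_zero
  have hy : p.getVert (r + 1) = y := hlen ▸ p.getVert_length
  have hf : f.Injective := by
    intro i j hij
    simp only [f] at hij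
    split_ifs at hij with hi hj hj
    · exact Fin.ext (hp.getVert_injOn (hi.trans hlen.ge) (hj.trans hlen.ge) hij)
    · exact absurd (hij ▸ p.getVert_mem_support i) hw
    · exact absurd (hij ▸ p.getVert_mem_support j) hw
    · omega
  have hrel (i j : Fin (r + 3)) (hij : (i.val + 1 = j.val ∧ j.val ≤ r + 1) ∨
      (i.val = 0 ∧ j.val = r + 1) ∨ (i.val = r + 2 ∧ (j.val = 0 ∨ j.val = r + 1))) :
      G.Adj (f i) (f j) := by
    rcases hij with ⟨hij, hj⟩ | ⟨hi, hj⟩ | ⟨hi, hj | hj⟩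
    · have hi : i.val ≤ r + 1 := by omega
      simp only [f, if_pos hi, if_pos hj, ← hij]
      exact p.adj_getVert_succ (by omega)
    · simpa [f, hi, hj, hx, hy] using hxy
    · simpa [f, hi, hj, hx] using hwx
    · simpa [f, hi, hj, hy] using hwy
  refine ⟨⟨f, hf⟩, fun i j hij => ?_⟩
  obtain ⟨-, hij | hij⟩ := (fromRel_adj _ i j).1 hij
  exacts [hrel i j hij, (hrel j i hij).symm]

theorem pathLengthLE_of_not_contains_theta (hfree : ¬ Contains G (theta r))
    (hA : ∀ x ∈ A, G.Adj u x) : PathLengthLE G A r := by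
  intro x y p hp hpA
  by_contra! hlen
  cases p with
  | nil => simp at hlen
  | @cons _ v _ hxv q =>
    rw [Walk.cons_isPath_iff] at hp
    rw [Walk.length_cons] at hlen
    simp only [Walk.support_cons, List.forall_mem_cons] at hpA
    have hsub : (q.take r).support ⊆ q.support := (q.isSubwalk_take r).support_subset
    have hu : u ∉ (q.take r).support := fun hu => (hA u (hpA.2 u (hsub hu))).ne rfl
    have hend : G.Adj (q.getVert r) u := (hA _ (hpA.2 _ (q.getVert_mem_support r))).symm
    have hv : G.Adj u v := hA v (hpA.2 v q.start_mem_support)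
    refine hfree (contains_theta_of_isPath ((hp.1.take r).concat hu hend) (w := x) ?_ hv.symm ?_
      hxv (hA x hpA.1).symm)
    · rw [Walk.length_concat, Walk.take_length, min_eq_left (by omega)]
    · rw [Walk.support_concat, List.mem_append, List.mem_singleton]
      exact not_or.2 ⟨fun hx => hp.2 (hsub hx), (hA x hpA.1).ne'⟩

/-- Any two vertices of `M`, equal ones included, have at least `k` common neighbours in `B`. -/
def CommonNeighborsGE (G : SimpleGraph V) (M B : Finset V) (k : ℕ) : Prop :=
  ∀ x ∈ M, ∀ y ∈ M, k ≤ #{b ∈ B | G.Adj x b ∧ G.Adj y b}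

namespace CommonNeighborsGE

theorem mono {l : ℕ} (h : CommonNeighborsGE G M B k) (hNM : N ⊆ M) (hlk : l ≤ k) :
    CommonNeighborsGE G N B l :=
  fun x hx y hy => hlk.trans (h x (hNM hx) y (hNM hy))

theorem erase_right (h : CommonNeighborsGE G M B (k + 1)) (b : V) :
    CommonNeighborsGE G M (B.erase b) k := by
  intro x hx y hy
  rw [filter_erase]
  exact (Nat.le_sub_one_of_lt (h x hx y hy)).trans pred_card_le_card_erase

theorem exists_adj_adj (h : CommonNeighborsGE G M B (k + 1)) (hx : x ∈ M) (hy : y ∈ M) :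
    ∃ b ∈ B, G.Adj x b ∧ G.Adj y b := by
  obtain ⟨b, hb⟩ := card_pos.1 (k.succ_pos.trans_le (h x hx y hy))
  exact ⟨b, mem_filter.1 hb⟩

theorem exists_isPath_length_eq (h : CommonNeighborsGE G M B (k + 1)) (hMB : Disjoint M B)
    (hM : k + 2 ≤ #M) (hv : v ∈ M) (hw : w ∈ M) (hvw : v ≠ w) :
    ∃ p : G.Walk v w, p.IsPath ∧ p.length = 2 * (k + 1) ∧ ∀ z ∈ p.support, z ∈ M ∪ B := by
  induction k generalizing M B v with
  | zero =>
    obtain ⟨b, hb, hvb, hwb⟩ := h.exists_adj_adj hv hw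
    refine ⟨.cons hvb (.cons hwb.symm .nil), ?_, rfl, ?_⟩
    · simp [Walk.cons_isPath_iff, hvb.ne, hwb.ne', hvw]
    · simp [hv, hw, hb]
  | succ k ih =>
    obtain ⟨m, hm⟩ : ((M.erase v).erase w).Nonempty := by
      rw [← card_pos, card_erase_of_mem (mem_erase.2 ⟨hvw.symm, hw⟩), card_erase_of_mem hv]
      omega
    simp only [mem_erase] at hm
    obtain ⟨hmw, hmv, hmM⟩ := hm
    obtain ⟨b, hb, hvb, hmb⟩ := h.exists_adj_adj hv hmM
    obtain ⟨q, hq, hlen, hqs⟩ := ih ((h.mono (erase_subset v M) le_rfl).erase_right b)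
      (hMB.mono (erase_subset v M) (erase_subset b B)) (by rw [card_erase_of_mem hv]; omega)
      (mem_erase.2 ⟨hmv, hmM⟩) (mem_erase.2 ⟨hvw.symm, hw⟩) hmw
    have hvB : v ∉ B := disjoint_left.1 hMB hv
    have hbM : b ∉ M := disjoint_right.1 hMB hb
    have hvq : v ∉ q.support := fun hvq => by simpa [hvB] using hqs v hvq
    have hbq : b ∉ q.support := fun hbq => by simpa [hbM] using hqs b hbq
    refine ⟨.cons hvb (.cons hmb.symm q), ?_, by simp only [Walk.length_cons, hlen]; ring, ?_⟩
    · simp [Walk.cons_isPath_iff, hq, hvq, hbq, hvb.ne]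
    · simp only [Walk.support_cons, List.forall_mem_cons, mem_union]
      refine ⟨.inl hv, .inr hb, fun z hz => ?_⟩
      exact (mem_union.1 (hqs z hz)).imp mem_of_mem_erase mem_of_mem_erase

theorem exists_mem_isPath_length_eq (h : CommonNeighborsGE G M B k) (hMB : Disjoint M B)
    (hM : k + 1 ≤ #M) (hv : v ∈ M) :
    ∃ m ∈ M, ∃ p : G.Walk v m, p.IsPath ∧ p.length = 2 * k ∧ ∀ z ∈ p.support, z ∈ M ∪ B := by
  cases k with
  | zero => exact ⟨v, hv, .nil, .nil, rfl, by simp [hv]⟩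
  | succ k =>
    obtain ⟨m, hm, hmv⟩ := exists_mem_ne (by omega : 1 < #M) v
    exact ⟨m, hm, h.exists_isPath_length_eq hMB hM hv hm hmv.symm⟩

end CommonNeighborsGE

/-- The set-up in which theta graphs are found: all of `A` is joined to a hub `u`, and the vertices
of `M ⊆ A` have many pairwise common neighbours in a set `B` outside `A` and without `u`. -/
structure RichNeighborhood (G : SimpleGraph V) (u : V) (A M B : Finset V) (k : ℕ) : Prop where
  adj : ∀ x ∈ A, G.Adj u x
  subset : M ⊆ A
  disjoint : Disjoint A B
  notMem : u ∉ B
  commonNeighborsGE : CommonNeighborsGE G M B k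
  card_le : k + 2 ≤ #M

namespace RichNeighborhood

theorem exists_isPath_to_hub (h : RichNeighborhood G u A M B k) {l : ℕ} (hl : l ≤ k) (hNM : N ⊆ M)
    (hN : l + 1 ≤ #N) (hv : v ∈ N) :
    ∃ p : G.Walk v u, p.IsPath ∧ p.length = 2 * l + 1 ∧
      ∀ z ∈ A, z ∉ N → z ∉ p.support := by
  have hNA : N ⊆ A := hNM.trans h.subset
  obtain ⟨m, hm, p, hp, hlen, hps⟩ := (h.commonNeighborsGE.mono hNM hl).exists_mem_isPath_length_eq
    (h.disjoint.mono_left hNA) hN hv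
  have hu : u ∉ p.support := fun hu => by
    rcases mem_union.1 (hps u hu) with hu | hu
    exacts [(h.adj u (hNA hu)).ne rfl, h.notMem hu]
  refine ⟨p.concat (h.adj m (hNA hm)).symm, hp.concat hu _, by rw [Walk.length_concat, hlen], ?_⟩
  intro z hzA hzN hz
  rw [Walk.support_concat, List.mem_append, List.mem_singleton] at hz
  rcases hz with hz | rfl
  · exact (mem_union.1 (hps z hz)).elim hzN (disjoint_left.1 h.disjoint hzA)
  · exact (h.adj z hzA).ne rfl

theorem contains_theta_even (h : RichNeighborhood G u A M B k) (hv : v ∈ M) (hw : w ∈ A)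
    (hvw : G.Adj v w) : Contains G (theta (2 * k)) := by
  have hM : k + 1 ≤ #(M.erase w) := by
    have := h.card_le
    have := pred_card_le_card_erase (s := M) (a := w)
    omega
  obtain ⟨p, hp, hlen, hps⟩ :=
    h.exists_isPath_to_hub le_rfl (erase_subset w M) hM (mem_erase.2 ⟨hvw.ne, hv⟩)
  exact contains_theta_of_isPath hp hlen (h.adj v (h.subset hv)).symm
    (hps w hw (notMem_erase w M)) hvw.symm (h.adj w hw).symm

theorem contains_theta_odd_of_mem (h : RichNeighborhood G u A M B (k + 1)) (hv : v ∈ M)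
    (hw : w ∈ M) (hvw : G.Adj v w) : Contains G (theta (2 * k + 1)) := by
  obtain ⟨p, hp, hlen, hps⟩ := h.commonNeighborsGE.exists_isPath_length_eq
    (h.disjoint.mono_left h.subset) (Nat.le_of_succ_le h.card_le) hv hw hvw.ne
  have hu : u ∉ p.support := fun hu => by
    rcases mem_union.1 (hps u hu) with hu | hu
    exacts [(h.adj u (h.subset hu)).ne rfl, h.notMem hu]
  exact contains_theta_of_isPath hp hlen hvw hu (h.adj v (h.subset hv)) (h.adj w (h.subset hw))

theorem contains_theta_odd_of_adj_adj (h : RichNeighborhood G u A M B (k + 1)) {m : V}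
    (hm : m ∈ M) (hv : v ∈ A) (hw : w ∈ A) (hmv : G.Adj m v) (hvw : G.Adj v w) (hmw : m ≠ w) :
    Contains G (theta (2 * k + 1)) := by
  have hM : k + 1 ≤ #((M.erase v).erase w) := by
    have := h.card_le
    have := pred_card_le_card_erase (s := M) (a := v)
    have := pred_card_le_card_erase (s := M.erase v) (a := w)
    omega
  obtain ⟨p, hp, hlen, hps⟩ := h.exists_isPath_to_hub k.le_succ
    ((erase_subset w _).trans (erase_subset v M)) hM
    (mem_erase.2 ⟨hmw, mem_erase.2 ⟨hmv.ne, hm⟩⟩)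
  have hwp : w ∉ p.support := hps w hw (by simp)
  have hvp : v ∉ p.support := hps v hv (by simp)
  refine contains_theta_of_isPath (hp.cons (h := hmv.symm) hvp) (by rw [Walk.length_cons, hlen])
    (h.adj v hv).symm ?_ hvw.symm (h.adj w hw).symm
  rw [Walk.support_cons, List.mem_cons]
  exact not_or.2 ⟨hvw.ne', hwp⟩

theorem notMem_and_card_filter_adj_le_one (h : RichNeighborhood G u A M B k)
    (hfree : ¬ Contains G (theta r)) (hk : r = 2 * k ∨ r + 1 = 2 * k) {m : V} (hm : m ∈ M)
    (hx : x ∈ A) (hmx : G.Adj m x) : x ∉ M ∧ #{w ∈ A | G.Adj x w} ≤ 1 := by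
  rcases hk with rfl | hk
  · exact absurd (h.contains_theta_even hm hx hmx) hfree
  obtain ⟨k, rfl⟩ := Nat.exists_eq_add_one.2 (by omega : 0 < k)
  obtain rfl : r = 2 * k + 1 := by omega
  refine ⟨fun hxM => hfree (h.contains_theta_odd_of_mem hm hxM hmx),
    (card_le_card fun w hw => ?_).trans (card_singleton m).le⟩
  rw [mem_filter] at hw
  by_contra hwm
  rw [mem_singleton] at hwm
  exact hfree (h.contains_theta_odd_of_adj_adj hm hx hw.1 hmx hw.2 (Ne.symm hwm))

end RichNeighborhood

theorem card_interedges_le_of_forall_adj_mem {L : Finset V} (hMA : M ⊆ A)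
    (hL : ∀ m ∈ M, ∀ x ∈ A, G.Adj m x → x ∈ L) :
    #(G.interedges M A) ≤ #(G.interedges L A) := by
  rw [card_interedges_comm G L]
  refine card_le_card fun ⟨m, x⟩ h => ?_
  rw [mem_interedges_iff] at h ⊢
  exact ⟨hMA h.1, hL m h.1 x h.2.1 h.2.2, h.2.2⟩

theorem card_interedges_le_max_mul_card_sdiff (hMA : M ⊆ A)
    (hM : ∀ m ∈ M, ∀ x ∈ A, G.Adj m x → x ∉ M ∧ #{w ∈ A | G.Adj x w} ≤ 1)
    (hA : PathLengthLE G A r) : #(G.interedges A A) ≤ max 2 r * #(A \ M) := by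
  let L := {x ∈ A \ M | ∃ m ∈ M, G.Adj m x}
  have hL (x : V) (hx : x ∈ A \ M) : x ∈ L ↔ ∃ m ∈ M, G.Adj m x := by simp [L, hx]
  have hLsub : L ⊆ A \ M := filter_subset _ _
  have hLA : L ⊆ A := hLsub.trans sdiff_subset
  have hcardL : #(G.interedges L A) ≤ #L := by
    refine (card_interedges_le_mul_of_forall_le fun x hx => ?_).trans_eq (one_mul _)
    obtain ⟨m, hm, hmx⟩ := (mem_filter.1 hx).2
    exact (hM m hm x (hLA hx) hmx).2
  have hcardM : #(G.interedges M A) ≤ #(G.interedges L A) :=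
    card_interedges_le_of_forall_adj_mem hMA fun m hm x hx hmx =>
      (hL x (mem_sdiff.2 ⟨hx, (hM m hm x hx hmx).1⟩)).2 ⟨m, hm, hmx⟩
  have hcardR : #(G.interedges ((A \ M) \ L) A) ≤ r * #((A \ M) \ L) := by
    refine le_trans (card_le_card fun ⟨x, y⟩ h => ?_)
      (hA.mono (sdiff_subset.trans sdiff_subset)).card_interedges_le
    simp only [mem_interedges_iff] at h ⊢
    obtain ⟨hx, hy, hxy⟩ := h
    obtain ⟨hxAM, hxL⟩ := mem_sdiff.1 hx
    have hxA : x ∈ A := (mem_sdiff.1 hxAM).1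
    have hyM : y ∉ M := fun hyM => hxL ((hL x hxAM).2 ⟨y, hyM, hxy.symm⟩)
    refine ⟨hx, mem_sdiff.2 ⟨mem_sdiff.2 ⟨hy, hyM⟩, fun hyL => ?_⟩, hxy⟩
    obtain ⟨m, hm, hmy⟩ := (mem_filter.1 hyL).2
    have hxm : x = m := card_le_one.1 (hM m hm y hy hmy).2 x (mem_filter.2 ⟨hxA, hxy.symm⟩) m
      (mem_filter.2 ⟨hMA hm, hmy.symm⟩)
    exact (mem_sdiff.1 hxAM).2 (hxm ▸ hm)
  calc #(G.interedges A A)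
      = #(G.interedges M A) + (#(G.interedges L A) + #(G.interedges ((A \ M) \ L) A)) := by
        rw [card_interedges_add_sdiff_left G hLsub, card_interedges_add_sdiff_left G hMA]
    _ ≤ 2 * #L + r * #((A \ M) \ L) := by omega
    _ ≤ max 2 r * #L + max 2 r * #((A \ M) \ L) := by gcongr <;> simp
    _ = max 2 r * #(A \ M) := by rw [← mul_add, add_comm #L, card_sdiff_add_card_eq_card hLsub]

end Theta

section Arithmetic

variable {r k a b s l e f : ℤ}

theorem four_mul_add_le_sq_add {c : ℤ} (he : 4 * e ≤ (a - b) ^ 2 + 4 * c) (hf : f + c ≤ a * b) :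
    4 * (e + f) ≤ (a + b) ^ 2 := by
  linarith [add_sq a b, sub_sq a b]

theorem four_mul_mul_le_sq_sub (hr : 0 ≤ r) (hn : 7 * r ≤ a + b) (hbr : b ≤ r) :
    4 * (r * a) ≤ (a - b) ^ 2 := by
  have hmono : (a - r) ^ 2 ≤ (a - b) ^ 2 := by gcongr; linarith
  linarith [mul_nonneg (by linarith : 0 ≤ a) (by linarith : 0 ≤ a - 6 * r), sq_nonneg r]

theorem neg_one_le_sq_sub {n : ℤ} (hr : 1 ≤ r)
    (hk : r = 2 * k ∧ 7 * r ≤ n ∨ r + 1 = 2 * k ∧ 10 * r ≤ n) :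
    -1 ≤ n ^ 2 - 2 * n * (2 * r - 1) - (2 * r - 1) ^ 2 - 4 * ((n - k) * (k + 1)) := by
  rcases hk with ⟨rfl, hn⟩ | ⟨hk, hn⟩
  · have h1 : 0 ≤ (n - 14 * k) * (n + 2 * k - 2) := mul_nonneg (by omega) (by omega)
    have h2 : 0 ≤ 16 * k * (k - 1) := mul_nonneg (by omega) (by omega)
    linarith
  · obtain rfl : r = 2 * k - 1 := by linarith
    have h1 : 0 ≤ (n - (20 * k - 10)) * (n + 8 * k - 8) := mul_nonneg (by omega) (by omega)
    have h2 : 0 ≤ (k - 1) * (148 * k - 64) := mul_nonneg (by omega) (by omega)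
    linarith

theorem four_mul_mul_le_of_le_add (hr : 1 ≤ r)
    (hk : r = 2 * k ∧ 7 * r ≤ a + b ∨ r + 1 = 2 * k ∧ 10 * r ≤ a + b)
    (hbk : k ≤ b) (hs : b ≤ 2 * s + k) (hl0 : 0 ≤ l) (hl : a ≤ l + k + 1) :
    4 * (r * a) ≤ (a - b) ^ 2 + 4 * (s * l) := by
  have hsl : 2 * ((b - k) * (a - k - 1)) ≤ 4 * (s * l) := by
    calc 2 * ((b - k) * (a - k - 1)) ≤ 2 * ((b - k) * l) := by gcongr; all_goals linarith
      _ ≤ 2 * (2 * s * l) := by gcongr; linarith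
      _ = 4 * (s * l) := by ring
  have hsq := sq_nonneg (2 * a - (a + b) - (2 * r - 1))
  -- Dropping the completed square `hsq` leaves a lower bound that is `-1` when `r = 2` and
  -- `a + b = 14`; it suffices because the right side is even.
  have hdouble : -1 ≤ 2 * ((a - b) ^ 2 + 2 * ((b - k) * (a - k - 1)) - 4 * (r * a)) := by
    linarith [neg_one_le_sq_sub hr hk]
  omega

theorem four_mul_mul_le_of_le (hk : r = 2 * k ∧ 7 * r ≤ a + b ∨ r + 1 = 2 * k ∧ 10 * r ≤ a + b)
    (hb : 0 ≤ b) (hs : b ≤ 2 * s + k) (hl : 0 ≤ l) (hla : l ≤ a) :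
    4 * (r * l) ≤ (a - b) ^ 2 + 4 * (s * l) := by
  suffices h : (4 * r + 2 * k - 2 * b) * l ≤ (a - b) ^ 2 by
    linarith [mul_le_mul_of_nonneg_right hs hl]
  rcases le_total (4 * r + 2 * k - 2 * b) 0 with hneg | hpos
  · exact (mul_nonpos_of_nonpos_of_nonneg hneg hl).trans (sq_nonneg _)
  refine (mul_le_mul_of_nonneg_left hla hpos).trans ?_
  have hrk : 5 * (2 * r + k) ≤ 2 * (a + b) := by omega
  have ha : 0 ≤ a := hl.trans hla
  linarith [mul_le_mul_of_nonneg_right hrk ha, sq_nonneg (a - 2 * b), sq_nonneg b]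

theorem four_mul_le_of_le_two_mul (hn : 10 ≤ a + b) (hb : 1 < b) (hs : b ≤ 2 * s + 1)
    (hl : 0 ≤ l) (hel : e ≤ 2 * l) (hea : e ≤ a) : 4 * e ≤ (a - b) ^ 2 + 4 * (s * l) := by
  rcases (by omega : s = 1 ∨ 2 ≤ s) with rfl | hs2
  · have : (a - 3) ^ 2 ≤ (a - b) ^ 2 := by gcongr; all_goals omega
    nlinarith
  · linarith [sq_nonneg (a - b), mul_le_mul_of_nonneg_right hs2 hl]

theorem four_mul_add_le_sq {m : ℤ} (hr : 1 ≤ r)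
    (hk : r = 2 * k ∧ 7 * r ≤ a + b ∨ r + 1 = 2 * k ∧ 10 * r ≤ a + b) (hb : 0 ≤ b) (hs0 : 0 ≤ s)
    (hs : b ≤ 2 * s + k) (hl : 0 ≤ l) (hm : 0 ≤ m) (hlm : l + m = a) (hf : f + s * l ≤ a * b)
    (hea : e ≤ r * a) (hel : k < b → k + 2 ≤ m → e ≤ max 2 r * l) :
    4 * (e + f) ≤ (a + b) ^ 2 := by
  refine four_mul_add_le_sq_add ?_ hf
  rcases le_or_gt b k with hbk | hbk
  · have := four_mul_mul_le_sq_sub (a := a) (b := b) (r := r) (by omega) (by omega) (by omega)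
    linarith [mul_nonneg hs0 hl]
  rcases lt_or_ge m (k + 2) with hmk | hmk
  · linarith [four_mul_mul_le_of_le_add hr hk hbk.le hs hl (by omega)]
  have hel2 : e ≤ max 2 r * l := hel hbk hmk
  rcases hr.eq_or_lt with rfl | hr2
  · obtain rfl : k = 1 := by omega
    exact four_mul_le_of_le_two_mul (by omega) hbk hs hl hel2 (by linarith)
  · rw [max_eq_right (by omega)] at hel2
    linarith [four_mul_mul_le_of_le hk hb hs hl (by omega)]

end Arithmetic

section UpperBound

variable {V : Type*} {G : SimpleGraph V} {A B M : Finset V} {k r s : ℕ}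

theorem commonNeighborsGE_of_card_lt (h : ∀ x ∈ M, #B < #{b ∈ B | G.Adj x b} + s)
    (hs : 2 * s + k ≤ #B + 1) : CommonNeighborsGE G M B (k + 1) := by
  intro x hx y hy
  have hunion : #({b ∈ B | G.Adj x b} ∪ {b ∈ B | G.Adj y b}) ≤ #B :=
    card_le_card (union_subset (filter_subset _ _) (filter_subset _ _))
  have hcard := card_union_add_card_inter {b ∈ B | G.Adj x b} {b ∈ B | G.Adj y b}
  rw [← filter_and] at hcard
  have := h x hx
  have := h y hy
  omega

theorem four_mul_card_interedges_neighbors_le [Fintype V] (hr : 1 ≤ r)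
    (hk : r = 2 * k ∧ 7 * r ≤ Fintype.card V ∨ r + 1 = 2 * k ∧ 10 * r ≤ Fintype.card V)
    (hfree : ¬ Contains G (theta r)) (u : V) :
    4 * #(G.interedges {v | G.Adj u v} univ) ≤ Fintype.card V ^ 2 := by
  let A : Finset V := {v | G.Adj u v}
  let B : Finset V := univ \ A
  obtain ⟨s, hs, hs'⟩ : ∃ s, #B ≤ 2 * s + k ∧ (k < #B → 2 * s + k ≤ #B + 1) :=
    ⟨(#B + 1 - k) / 2, by omega, by omega⟩
  let M : Finset V := {v ∈ A | #B < #{b ∈ B | G.Adj v b} + s}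
  have hMA : M ⊆ A := filter_subset _ A
  have hcard : #A + #B = Fintype.card V := by
    rw [add_comm, card_sdiff_add_card_eq_card (subset_univ A), card_univ]
  have hadj : ∀ x ∈ A, G.Adj u x := fun x hx => by simpa [A] using hx
  have hpath : PathLengthLE G A r := pathLengthLE_of_not_contains_theta hfree hadj
  have hAB : #(G.interedges A B) + s * #(A \ M) ≤ #A * #B := by
    refine card_interedges_add_mul_card_sdiff_le hMA fun v hv => not_lt.1 fun hlt => ?_
    rw [mem_sdiff] at hv
    exact hv.2 (mem_filter.2 ⟨hv.1, hlt⟩)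
  have hM (hkB : k < #B) (hkM : k + 2 ≤ #M) : #(G.interedges A A) ≤ max 2 r * #(A \ M) := by
    have hrich : RichNeighborhood G u A M (B.erase u) k :=
      { adj := hadj
        subset := hMA
        disjoint := disjoint_sdiff.mono_right (erase_subset u B)
        notMem := notMem_erase u B
        commonNeighborsGE := (commonNeighborsGE_of_card_lt
          (fun x hx => (mem_filter.1 hx).2) (hs' hkB)).erase_right u
        card_le := hkM }
    exact card_interedges_le_max_mul_card_sdiff hMA
      (fun m hm x hx => hrich.notMem_and_card_filter_adj_le_one hfree
        (hk.imp And.left And.left) hm hx) hpath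
  rw [← card_interedges_add_sdiff_right G (subset_univ A), ← hcard]
  rw [← hcard] at hk
  have hrA : #(G.interedges A A) ≤ r * #A := hpath.card_interedges_le
  have hlm : #(A \ M) + #M = #A := card_sdiff_add_card_eq_card hMA
  zify at hr hk hs hAB hrA hlm hM ⊢
  exact four_mul_add_le_sq hr hk (by positivity) (by positivity) hs (by positivity) (by positivity)
    hlm hAB hrA hM

theorem sum_card_interedges_neighbors [Fintype V] (G : SimpleGraph V) :
    ∑ u, #(G.interedges {v | G.Adj u v} univ) = ∑ v, G.degree v ^ 2 := by
  have hdeg (v : V) : #{w | G.Adj v w} = G.degree v := by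
    rw [← card_neighborFinset_eq_degree, neighborFinset_eq_filter]
  simp only [card_interedges_eq_sum, hdeg, sum_filter]
  rw [sum_comm]
  refine sum_congr rfl fun v _ => ?_
  rw [← sum_filter, sum_const, smul_eq_mul, sq, ← hdeg v]
  simp only [G.adj_comm]

theorem four_mul_edgeCount_le [Fintype V]
    (h : ∀ u, 4 * #(G.interedges {v | G.Adj u v} univ) ≤ Fintype.card V ^ 2) :
    4 * edgeCount G ≤ Fintype.card V ^ 2 := by
  have hdeg : ∑ v, G.degree v = 2 * edgeCount G := by
    rw [sum_degrees_eq_twice_card_edges, edgeCount, ← coe_edgeFinset, Set.ncard_coe_finset]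
  have hsum : 4 * ∑ v, G.degree v ^ 2 ≤ Fintype.card V * Fintype.card V ^ 2 := by
    rw [← sum_card_interedges_neighbors, mul_sum, ← card_univ, ← smul_eq_mul #univ]
    exact sum_le_card_nsmul _ _ _ fun u _ => h u
  refine (Nat.pow_le_pow_iff_left two_ne_zero).1 ?_
  calc (4 * edgeCount G) ^ 2 = 4 * (∑ v, G.degree v) ^ 2 := by rw [hdeg]; ring
    _ ≤ 4 * (Fintype.card V * ∑ v, G.degree v ^ 2) := by
      gcongr
      exact sq_sum_le_card_mul_sum_sq
    _ = Fintype.card V * (4 * ∑ v, G.degree v ^ 2) := by ring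
    _ ≤ Fintype.card V * (Fintype.card V * Fintype.card V ^ 2) := by gcongr
    _ = (Fintype.card V ^ 2) ^ 2 := by ring

theorem edgeCount_le_of_not_contains_theta [Fintype V] (hr : 1 ≤ r)
    (hodd : Odd r → 10 * r ≤ Fintype.card V) (heven : Even r → 7 * r ≤ Fintype.card V)
    (hfree : ¬ Contains G (theta r)) : edgeCount G ≤ Fintype.card V ^ 2 / 4 := by
  obtain ⟨k, hk⟩ : ∃ k, r = 2 * k ∧ 7 * r ≤ Fintype.card V ∨
      r + 1 = 2 * k ∧ 10 * r ≤ Fintype.card V := by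
    rcases Nat.even_or_odd r with h | h
    · obtain ⟨k, hk⟩ := even_iff_exists_two_mul.1 h
      exact ⟨k, .inl ⟨hk, heven h⟩⟩
    · obtain ⟨k, hk⟩ := h
      exact ⟨k + 1, .inr ⟨by omega, hodd ⟨k, hk⟩⟩⟩
  have := four_mul_edgeCount_le (four_mul_card_interedges_neighbors_le hr hk hfree)
  omega

end UpperBound

section LowerBound

theorem not_contains_turanGraph_two_theta (n r : ℕ) : ¬ Contains (turanGraph n 2) (theta r) := by
  rintro ⟨f, hf⟩
  have h1 := hf ⟨0, by omega⟩ ⟨r + 1, by omega⟩ (by simp [theta])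
  have h2 := hf ⟨r + 2, by omega⟩ ⟨r + 1, by omega⟩ (by simp [theta])
  have h3 := hf ⟨r + 2, by omega⟩ ⟨0, by omega⟩ (by simp [theta])
  simp only [turanGraph_adj, ne_eq] at h1 h2 h3
  omega

theorem edgeCount_turanGraph_two (n : ℕ) : edgeCount (turanGraph n 2) = n ^ 2 / 4 := by
  rw [edgeCount, ← coe_edgeFinset, Set.ncard_coe_finset, card_edgeFinset_turanGraph]
  rcases Nat.even_or_odd' n with ⟨m, rfl | rfl⟩
  · simp
  · have hsq : (2 * m + 1) ^ 2 = 4 * (m ^ 2 + m) + 1 := by ring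
    have hmod : (2 * m + 1) % 2 = 1 := by omega
    rw [hmod, Nat.choose_eq_zero_of_lt one_lt_two]
    omega

end LowerBound

/-- Corollary 1.11 (ii): `ex(n, θ_{r+1}) = ⌊n²/4⌋` for `n ≥ 10r` if `r` is odd and
`n ≥ 7r` if `r` is even. -/
theorem stmt7 (r n : ℕ) (hr : 1 ≤ r) (hodd : Odd r → 10 * r ≤ n)
    (heven : Even r → 7 * r ≤ n) :
    (∀ G : SimpleGraph (Fin n), ¬ Contains G (theta r) → edgeCount G ≤ n ^ 2 / 4) ∧
    (∃ G : SimpleGraph (Fin n), ¬ Contains G (theta r) ∧ edgeCount G = n ^ 2 / 4) := by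
  refine ⟨fun G hfree => ?_, turanGraph n 2, not_contains_turanGraph_two_theta n r,
    edgeCount_turanGraph_two n⟩
  rw [← Fintype.card_fin n] at hodd heven
  simpa only [Fintype.card_fin] using edgeCount_le_of_not_contains_theta hr hodd heven hfree
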